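/- arXiv:2604.05653 — 5 statements merged into one kernel-verified Lean document; each statement's English description precedes it below -/
import Mathlib

section
/- Assume four planar bodies move according to the stated ansatz with masses 1, 1, m2, m2 and G = 1. Then the four bodies satisfy Newton's equations of the 4-body problem, r⃗̈_i = Σ_{j≠i} m_j (r⃗_j − r⃗_i)/‖r⃗_j − r⃗_i‖³, if and only if the functions r1, θ, r2, β satisfy the system: r̈1 = r1 θ̇² − 1/(4 r1²) + m2[(r2 sin δ − r1)/d1³ + (−r2 sin δ − r1)/d2³], θ̈ = (m2 r2 cos δ (1/d1³ − 1/d2³) − 2 ṙ1 θ̇)/r1, r̈2 = r2 β̇² − m2/(4 r2²) + [(r1 sin δ − r2)/d1³ + (−r1 sin δ − r2)/d2³], and β̈ = (r1 cos δ (1/d2³ − 1/d1³) − 2 ṙ2 β̇)/r2. -/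
open Real

noncomputable def vec2 (x y : ℝ) : EuclideanSpace ℝ (Fin 2) :=
  (WithLp.equiv 2 (Fin 2 → ℝ)).symm ![x, y]

lemma vec2_eq_iff (a b c d : ℝ) : vec2 a b = vec2 c d ↔ a = c ∧ b = d := by
  constructor
  · intro h
    have h0 := congrArg (fun v : EuclideanSpace ℝ (Fin 2) => v 0) h
    have h1 := congrArg (fun v : EuclideanSpace ℝ (Fin 2) => v 1) h
    simp [vec2] at h0 h1
    exact ⟨h0, h1⟩
  · rintro ⟨rfl, rfl⟩; rfl

lemma vec2_smul (k a b : ℝ) : k • vec2 a b = vec2 (k * a) (k * b) := by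
  ext i; fin_cases i <;> simp [vec2]

lemma vec2_add (a b c d : ℝ) : vec2 a b + vec2 c d = vec2 (a + c) (b + d) := by
  ext i; fin_cases i <;> simp [vec2]

lemma vec2_sub (a b c d : ℝ) : vec2 a b - vec2 c d = vec2 (a - c) (b - d) := by
  ext i; fin_cases i <;> simp [vec2]

lemma vec2_neg (a b : ℝ) : -vec2 a b = vec2 (-a) (-b) := by
  ext i; fin_cases i <;> simp [vec2]

lemma vec2_norm (a b : ℝ) : ‖vec2 a b‖ = Real.sqrt (a ^ 2 + b ^ 2) := by
  simp [vec2, EuclideanSpace.norm_eq, Fin.sum_univ_two]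

lemma vec2_hasDerivAt {f g : ℝ → ℝ} {f' g' t : ℝ} (hf : HasDerivAt f f' t)
    (hg : HasDerivAt g g' t) : HasDerivAt (fun s => vec2 (f s) (g s)) (vec2 f' g') t := by
  have e : ∀ a b : ℝ, vec2 a b = a • vec2 1 0 + b • vec2 0 1 := by
    intro a b; simp [vec2_smul, vec2_add]
  have h := (hf.smul_const (vec2 1 0)).add (hg.smul_const (vec2 0 1))
  rw [e f' g']
  refine h.congr_of_eventuallyEq (Filter.Eventually.of_forall fun s => ?_)
  exact e _ _

lemma polar_deriv2 (r φ : ℝ → ℝ) (hr : Differentiable ℝ r) (hr2 : Differentiable ℝ (deriv r))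
    (hφ : Differentiable ℝ φ) (hφ2 : Differentiable ℝ (deriv φ)) (t : ℝ) :
    deriv (deriv (fun s => vec2 (r s * Real.cos (φ s)) (r s * Real.sin (φ s)))) t =
      vec2 ((deriv (deriv r) t - r t * deriv φ t ^ 2) * Real.cos (φ t)
          - (r t * deriv (deriv φ) t + 2 * deriv r t * deriv φ t) * Real.sin (φ t))
        ((deriv (deriv r) t - r t * deriv φ t ^ 2) * Real.sin (φ t)
          + (r t * deriv (deriv φ) t + 2 * deriv r t * deriv φ t) * Real.cos (φ t)) := by
  have e : deriv (fun s => vec2 (r s * Real.cos (φ s)) (r s * Real.sin (φ s))) =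
      fun s => vec2 (deriv r s * Real.cos (φ s) + r s * (-Real.sin (φ s) * deriv φ s))
        (deriv r s * Real.sin (φ s) + r s * (Real.cos (φ s) * deriv φ s)) := by
    funext s
    exact (vec2_hasDerivAt ((hr s).hasDerivAt.mul (hφ s).hasDerivAt.cos)
      ((hr s).hasDerivAt.mul (hφ s).hasDerivAt.sin)).deriv
  rw [e]
  have h1 := (hr t).hasDerivAt
  have h2 := (hr2 t).hasDerivAt
  have h3 := (hφ t).hasDerivAt
  have h4 := (hφ2 t).hasDerivAt
  have h := vec2_hasDerivAt ((h2.mul h3.cos).add (h1.mul (h3.sin.neg.mul h4)))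
    ((h2.mul h3.sin).add (h1.mul (h3.cos.mul h4)))
  refine Eq.trans h.deriv ?_
  rw [vec2_eq_iff]
  constructor <;> simp only [Pi.neg_apply, Pi.mul_apply] <;> ring

lemma rot_iff (A B P Q φ : ℝ) :
    vec2 (A * Real.cos φ - B * Real.sin φ) (A * Real.sin φ + B * Real.cos φ) =
      vec2 (P * Real.cos φ - Q * Real.sin φ) (P * Real.sin φ + Q * Real.cos φ)
      ↔ A = P ∧ B = Q := by
  rw [vec2_eq_iff]
  constructor
  · rintro ⟨h1, h2⟩
    have := Real.sin_sq_add_cos_sq φ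
    constructor
    · linear_combination Real.cos φ * h1 + Real.sin φ * h2 - (A - P) * this
    · linear_combination -Real.sin φ * h1 + Real.cos φ * h2 - (B - Q) * this
  · rintro ⟨rfl, rfl⟩; exact ⟨rfl, rfl⟩

/-- Force on the body at polar position `(r, φ)`, resolved radially and tangentially; `S`, `C` are
the radial and tangential components of the direction of the other pair. -/
lemma force (M M' r R φ ψ S C D1 D2 : ℝ) (hr : 0 < r)
    (hc : Real.cos ψ = S * Real.cos φ - C * Real.sin φ)
    (hs : Real.sin ψ = S * Real.sin φ + C * Real.cos φ)
    (hSC : S ^ 2 + C ^ 2 = 1)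
    (hD1 : D1 = Real.sqrt (r ^ 2 + R ^ 2 - 2 * r * R * S))
    (hD2 : D2 = Real.sqrt (r ^ 2 + R ^ 2 + 2 * r * R * S))
    (b c : EuclideanSpace ℝ (Fin 2))
    (hb : b = vec2 (r * Real.cos φ) (r * Real.sin φ))
    (hcc : c = vec2 (R * Real.cos ψ) (R * Real.sin ψ)) :
    (M / ‖-b - b‖ ^ 3) • (-b - b) + (M' / ‖c - b‖ ^ 3) • (c - b)
        + (M' / ‖-c - b‖ ^ 3) • (-c - b) =
      vec2 ((-(M / (4 * r ^ 2)) + M' * ((R * S - r) / D1 ^ 3 + (-(R * S) - r) / D2 ^ 3))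
            * Real.cos φ - (M' * R * C * (1 / D1 ^ 3 - 1 / D2 ^ 3)) * Real.sin φ)
        ((-(M / (4 * r ^ 2)) + M' * ((R * S - r) / D1 ^ 3 + (-(R * S) - r) / D2 ^ 3))
            * Real.sin φ + (M' * R * C * (1 / D1 ^ 3 - 1 / D2 ^ 3)) * Real.cos φ) := by
  have h1 := Real.sin_sq_add_cos_sq φ
  have n1 : ‖-b - b‖ = 2 * r := by
    rw [hb, vec2_neg, vec2_sub, vec2_norm, Real.sqrt_eq_iff_mul_self_eq_of_pos (by positivity)]
    linear_combination (-4 * r ^ 2) * h1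
  have n2 : ‖c - b‖ = D1 := by
    rw [hb, hcc, vec2_sub, vec2_norm, hD1, hc, hs]
    congr 1
    linear_combination (r ^ 2 + R ^ 2 * (S ^ 2 + C ^ 2) - 2 * r * R * S) * h1 + R ^ 2 * hSC
  have n3 : ‖-c - b‖ = D2 := by
    rw [hb, hcc, vec2_neg, vec2_sub, vec2_norm, hD2, hc, hs]
    congr 1
    linear_combination (r ^ 2 + R ^ 2 * (S ^ 2 + C ^ 2) + 2 * r * R * S) * h1 + R ^ 2 * hSC
  rw [n1, n2, n3, hb, hcc]
  simp only [vec2_neg, vec2_sub, vec2_smul, vec2_add]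
  have k : M / (2 * r) ^ 3 * (2 * r) = M / (4 * r ^ 2) := by field_simp; ring
  rw [vec2_eq_iff, hc, hs]
  constructor
  · linear_combination (-Real.cos φ) * k
  · linear_combination (-Real.sin φ) * k

/-- Proposition: under the two-pair 4-body ansatz, Newton's equations of the
4-body problem are equivalent to the reduced system for `r1, θ, r2, β`. -/
theorem four_body_reduced_system
    (m2 : ℝ) (hm2 : 0 < m2)
    (r1 r2 θ β : ℝ → ℝ)
    (hr1pos : ∀ t, 0 < r1 t) (hr2pos : ∀ t, 0 < r2 t)
    (hr1d : Differentiable ℝ r1) (hr1d2 : Differentiable ℝ (deriv r1))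
    (hr2d : Differentiable ℝ r2) (hr2d2 : Differentiable ℝ (deriv r2))
    (hθd : Differentiable ℝ θ) (hθd2 : Differentiable ℝ (deriv θ))
    (hβd : Differentiable ℝ β) (hβd2 : Differentiable ℝ (deriv β))
    (δ d1 d2 : ℝ → ℝ)
    (hδ : ∀ t, δ t = θ t - β t)
    (hd1 : ∀ t, d1 t = Real.sqrt ((r1 t)^2 + (r2 t)^2 - 2 * r1 t * r2 t * Real.sin (δ t)))
    (hd2 : ∀ t, d2 t = Real.sqrt ((r1 t)^2 + (r2 t)^2 + 2 * r1 t * r2 t * Real.sin (δ t)))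
    (hd1pos : ∀ t, 0 < d1 t) (hd2pos : ∀ t, 0 < d2 t)
    (m : Fin 4 → ℝ)
    (hm0 : m 0 = 1) (hm1 : m 1 = 1) (hm2' : m 2 = m2) (hm3 : m 3 = m2)
    (bodies : Fin 4 → ℝ → EuclideanSpace ℝ (Fin 2))
    (hb0 : ∀ t, bodies 0 t = vec2 (r1 t * Real.cos (θ t)) (r1 t * Real.sin (θ t)))
    (hb1 : ∀ t, bodies 1 t = -(bodies 0 t))
    (hb2 : ∀ t, bodies 2 t =
      vec2 (r2 t * Real.cos (β t + π/2)) (r2 t * Real.sin (β t + π/2)))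
    (hb3 : ∀ t, bodies 3 t = -(bodies 2 t)) :
    (∀ (i : Fin 4) (t : ℝ),
        deriv (deriv (bodies i)) t =
          ∑ j ∈ Finset.univ.erase i,
            (m j / ‖bodies j t - bodies i t‖ ^ 3) • (bodies j t - bodies i t))
    ↔
    (∀ t : ℝ,
      deriv (deriv r1) t =
          r1 t * (deriv θ t)^2 - 1 / (4 * (r1 t)^2)
          + m2 * ((r2 t * Real.sin (δ t) - r1 t) / (d1 t)^3
                + (-(r2 t * Real.sin (δ t)) - r1 t) / (d2 t)^3)
      ∧ deriv (deriv θ) t =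
          (m2 * r2 t * Real.cos (δ t) * (1/(d1 t)^3 - 1/(d2 t)^3)
            - 2 * deriv r1 t * deriv θ t) / r1 t
      ∧ deriv (deriv r2) t =
          r2 t * (deriv β t)^2 - m2 / (4 * (r2 t)^2)
          + ((r1 t * Real.sin (δ t) - r2 t) / (d1 t)^3
            + (-(r1 t * Real.sin (δ t)) - r2 t) / (d2 t)^3)
      ∧ deriv (deriv β) t =
          (r1 t * Real.cos (δ t) * (1/(d2 t)^3 - 1/(d1 t)^3)
            - 2 * deriv r2 t * deriv β t) / r2 t) := by
  have hβ' : deriv (fun s => β s + π / 2) = deriv β := by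
    funext s; simp
  have f0 : bodies 0 = fun t => vec2 (r1 t * Real.cos (θ t)) (r1 t * Real.sin (θ t)) := funext hb0
  have f2 : bodies 2 = fun t => vec2 (r2 t * Real.cos (β t + π/2)) (r2 t * Real.sin (β t + π/2)) :=
    funext hb2
  have f1 : bodies 1 = -bodies 0 := funext hb1
  have f3 : bodies 3 = -bodies 2 := funext hb3
  have D0 : ∀ t, deriv (deriv (bodies 0)) t = _ := fun t => by
    rewrite [f0]; exact polar_deriv2 r1 θ hr1d hr1d2 hθd hθd2 t
  have D2 : ∀ t, deriv (deriv (bodies 2)) t = _ := fun t => by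
    rewrite [f2]
    exact polar_deriv2 r2 (fun s => β s + π / 2) hr2d hr2d2 (hβd.add_const _)
      (by rw [hβ']; exact hβd2) t
  rw [hβ'] at D2
  have negd : ∀ f : ℝ → EuclideanSpace ℝ (Fin 2), ∀ t,
      deriv (deriv (-f)) t = -deriv (deriv f) t := by
    intro f t
    have : deriv (-f) = -deriv f := by funext s; exact deriv.neg
    rw [this]; exact deriv.neg
  have F0 : ∀ t, ∑ j ∈ Finset.univ.erase (0 : Fin 4),
      (m j / ‖bodies j t - bodies 0 t‖ ^ 3) • (bodies j t - bodies 0 t) = _ := fun t => by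
    have s : (Finset.univ.erase (0 : Fin 4)) = {1, 2, 3} := by decide
    rewrite [s, Finset.sum_insert (by decide), Finset.sum_insert (by decide), Finset.sum_singleton,
      hm1, hm2', hm3, hb1, hb3, ← add_assoc]
    exact force 1 m2 (r1 t) (r2 t) (θ t) (β t + π / 2) (Real.sin (δ t)) (Real.cos (δ t)) (d1 t)
      (d2 t) (hr1pos t)
      (by
        have : β t = θ t - δ t := by rw [hδ]; ring
        rw [Real.cos_add_pi_div_two, this, Real.sin_sub]; ring)
      (by
        have : β t = θ t - δ t := by rw [hδ]; ring
        rw [Real.sin_add_pi_div_two, this, Real.cos_sub]; ring)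
      (Real.sin_sq_add_cos_sq _) (hd1 t) (hd2 t) _ _ (hb0 t) (hb2 t)
  have F2 : ∀ t, ∑ j ∈ Finset.univ.erase (2 : Fin 4),
      (m j / ‖bodies j t - bodies 2 t‖ ^ 3) • (bodies j t - bodies 2 t) = _ := fun t => by
    have s : (Finset.univ.erase (2 : Fin 4)) = {3, 0, 1} := by decide
    rewrite [s, Finset.sum_insert (by decide), Finset.sum_insert (by decide), Finset.sum_singleton,
      hm1, hm0, hm3, hb1, hb3, ← add_assoc]
    exact force m2 1 (r2 t) (r1 t) (β t + π / 2) (θ t) (Real.sin (δ t)) (-Real.cos (δ t)) (d1 t)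
      (d2 t) (hr2pos t)
      (by
        have : θ t = δ t + β t := by rw [hδ]; ring
        rw [Real.cos_add_pi_div_two, Real.sin_add_pi_div_two, this, Real.cos_add]; ring)
      (by
        have : θ t = δ t + β t := by rw [hδ]; ring
        rw [Real.cos_add_pi_div_two, Real.sin_add_pi_div_two, this, Real.sin_add]; ring)
      (by rw [neg_sq]; exact Real.sin_sq_add_cos_sq _)
      (by rw [hd1]; congr 1; ring) (by rw [hd2]; congr 1; ring) _ _ (hb2 t) (hb0 t)
  have F1 : ∀ t, ∑ j ∈ Finset.univ.erase (1 : Fin 4),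
      (m j / ‖bodies j t - bodies 1 t‖ ^ 3) • (bodies j t - bodies 1 t) =
      -∑ j ∈ Finset.univ.erase (0 : Fin 4),
      (m j / ‖bodies j t - bodies 0 t‖ ^ 3) • (bodies j t - bodies 0 t) := fun t => by
    have s : (Finset.univ.erase (0 : Fin 4)) = {1, 2, 3} := by decide
    have s' : (Finset.univ.erase (1 : Fin 4)) = {0, 3, 2} := by decide
    rw [s, s', Finset.sum_insert (by decide), Finset.sum_insert (by decide), Finset.sum_singleton,
      Finset.sum_insert (by decide), Finset.sum_insert (by decide), Finset.sum_singleton,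
      hm0, hm1, hm2', hm3, hb1, hb3, neg_add, neg_add, ← smul_neg, ← smul_neg, ← smul_neg]
    have e1 : bodies 0 t - -bodies 0 t = -(-bodies 0 t - bodies 0 t) := by abel
    have e2 : -bodies 2 t - -bodies 0 t = -(bodies 2 t - bodies 0 t) := by abel
    have e3 : bodies 2 t - -bodies 0 t = -(-bodies 2 t - bodies 0 t) := by abel
    rw [e1, e2, e3, norm_neg, norm_neg, norm_neg]
  have F3 : ∀ t, ∑ j ∈ Finset.univ.erase (3 : Fin 4),
      (m j / ‖bodies j t - bodies 3 t‖ ^ 3) • (bodies j t - bodies 3 t) =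
      -∑ j ∈ Finset.univ.erase (2 : Fin 4),
      (m j / ‖bodies j t - bodies 2 t‖ ^ 3) • (bodies j t - bodies 2 t) := fun t => by
    have s : (Finset.univ.erase (2 : Fin 4)) = {3, 0, 1} := by decide
    have s' : (Finset.univ.erase (3 : Fin 4)) = {2, 1, 0} := by decide
    rw [s, s', Finset.sum_insert (by decide), Finset.sum_insert (by decide), Finset.sum_singleton,
      Finset.sum_insert (by decide), Finset.sum_insert (by decide), Finset.sum_singleton,
      hm0, hm1, hm2', hm3, hb1, hb3, neg_add, neg_add, ← smul_neg, ← smul_neg, ← smul_neg]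
    have e1 : bodies 2 t - -bodies 2 t = -(-bodies 2 t - bodies 2 t) := by abel
    have e2 : -bodies 0 t - -bodies 2 t = -(bodies 0 t - bodies 2 t) := by abel
    have e3 : bodies 0 t - -bodies 2 t = -(-bodies 0 t - bodies 2 t) := by abel
    rw [e1, e2, e3, norm_neg, norm_neg, norm_neg]
  have E0 : ∀ t, (deriv (deriv (bodies 0)) t = ∑ j ∈ Finset.univ.erase (0 : Fin 4),
      (m j / ‖bodies j t - bodies 0 t‖ ^ 3) • (bodies j t - bodies 0 t)) ↔ _ := fun t => by
    rewrite [D0, F0]; exact rot_iff _ _ _ _ _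
  have E2 : ∀ t, (deriv (deriv (bodies 2)) t = ∑ j ∈ Finset.univ.erase (2 : Fin 4),
      (m j / ‖bodies j t - bodies 2 t‖ ^ 3) • (bodies j t - bodies 2 t)) ↔ _ := fun t => by
    rewrite [D2, F2]; exact rot_iff _ _ _ _ _
  constructor
  · intro h t
    obtain ⟨a, b⟩ := (E0 t).1 (h 0 t)
    obtain ⟨c, d⟩ := (E2 t).1 (h 2 t)
    refine ⟨by linear_combination a, ?_, by linear_combination c, ?_⟩
    · rw [eq_div_iff (hr1pos t).ne']; linear_combination b
    · rw [eq_div_iff (hr2pos t).ne']; linear_combination d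
  · intro h
    have h0 : ∀ t, _ := fun t => (E0 t).2 (by
      obtain ⟨a, b, -, -⟩ := h t
      rw [eq_div_iff (hr1pos t).ne'] at b
      exact ⟨by linear_combination a, by linear_combination b⟩)
    have h2 : ∀ t, _ := fun t => (E2 t).2 (by
      obtain ⟨-, -, c, d⟩ := h t
      rw [eq_div_iff (hr2pos t).ne'] at d
      exact ⟨by linear_combination c, by linear_combination d⟩)
    intro i t
    fin_cases i
    · exact h0 t
    · refine Eq.trans ?_ (F1 t).symm
      rw [← h0 t, ← negd, ← f1]; rfl
    · exact h2 t
    · refine Eq.trans ?_ (F3 t).symm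
      rw [← h2 t, ← negd, ← f3]; rfl
end

section
/- Suppose r1, r2, θ, β are twice differentiable on an interval, r1(t), r2(t) > 0 and d1(t), d2(t), d3(t) > 0 there, and they satisfy the reduced 6-body system θ̈ = (m2 B1 − 2 ṙ1 θ̇)/r1, r̈1 = r1 θ̇² − 1/(√3 r1²) + m2 A1, β̈ = (B2 − 2 ṙ2 β̇)/r2, r̈2 = r2 β̇² + A2 − m2/(√3 r2²). Then the angular momentum L(t) = 3 r1(t)² θ̇(t) + 3 m2 r2(t)² β̇(t) is constant on the interval. -/
open Real

/-- Conservation of angular momentum for the reduced 6-body system: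
`L = 3 r1² θ̇ + 3 m2 r2² β̇` is constant on the interval. -/
theorem six_body_angular_momentum_conserved
    (m2 : ℝ) (hm2 : 0 < m2) (a b : ℝ)
    (r1 r2 θ β : ℝ → ℝ)
    (δ d1 d2 d3 A1 B1 A2 B2 : ℝ → ℝ)
    (hδ : ∀ t, δ t = θ t - β t)
    (hd1 : ∀ t, d1 t =
      Real.sqrt ((r1 t)^2 - 2 * r1 t * r2 t * Real.sin (π/6 + δ t) + (r2 t)^2))
    (hd2 : ∀ t, d2 t =
      Real.sqrt ((r1 t)^2 + 2 * r1 t * r2 t * Real.cos (δ t) + (r2 t)^2))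
    (hd3 : ∀ t, d3 t =
      Real.sqrt ((r1 t)^2 - 2 * r1 t * r2 t * Real.sin (π/6 - δ t) + (r2 t)^2))
    (hA1 : ∀ t, A1 t =
      (-(r1 t) + r2 t * Real.sin (π/6 + δ t)) / (d1 t)^3
      + (-(r1 t) - r2 t * Real.cos (δ t)) / (d2 t)^3
      + (-(r1 t) + r2 t * Real.sin (π/6 - δ t)) / (d3 t)^3)
    (hB1 : ∀ t, B1 t =
      r2 t * Real.cos (π/6 + δ t) / (d1 t)^3
      + r2 t * Real.sin (δ t) / (d2 t)^3
      - r2 t * Real.cos (π/6 - δ t) / (d3 t)^3)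
    (hA2 : ∀ t, A2 t =
      (r1 t * Real.sin (π/6 + δ t) - r2 t) / (d1 t)^3
      + (r1 t * Real.sin (π/6 - δ t) - r2 t) / (d3 t)^3
      + (-(r1 t * Real.cos (δ t)) - r2 t) / (d2 t)^3)
    (hB2 : ∀ t, B2 t =
      -(r1 t * Real.cos (π/6 + δ t)) / (d1 t)^3
      + r1 t * Real.cos (π/6 - δ t) / (d3 t)^3
      - r1 t * Real.sin (δ t) / (d2 t)^3)
    (hr1pos : ∀ t ∈ Set.Ioo a b, 0 < r1 t) (hr2pos : ∀ t ∈ Set.Ioo a b, 0 < r2 t)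
    (hd1pos : ∀ t ∈ Set.Ioo a b, 0 < d1 t) (hd2pos : ∀ t ∈ Set.Ioo a b, 0 < d2 t)
    (hd3pos : ∀ t ∈ Set.Ioo a b, 0 < d3 t)
    (hr1d : ∀ t ∈ Set.Ioo a b, DifferentiableAt ℝ r1 t)
    (hr1d2 : ∀ t ∈ Set.Ioo a b, DifferentiableAt ℝ (deriv r1) t)
    (hr2d : ∀ t ∈ Set.Ioo a b, DifferentiableAt ℝ r2 t)
    (hr2d2 : ∀ t ∈ Set.Ioo a b, DifferentiableAt ℝ (deriv r2) t)
    (hθd : ∀ t ∈ Set.Ioo a b, DifferentiableAt ℝ θ t)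
    (hθd2 : ∀ t ∈ Set.Ioo a b, DifferentiableAt ℝ (deriv θ) t)
    (hβd : ∀ t ∈ Set.Ioo a b, DifferentiableAt ℝ β t)
    (hβd2 : ∀ t ∈ Set.Ioo a b, DifferentiableAt ℝ (deriv β) t)
    (hODE : ∀ t ∈ Set.Ioo a b,
      deriv (deriv θ) t = (m2 * B1 t - 2 * deriv r1 t * deriv θ t) / r1 t
      ∧ deriv (deriv r1) t =
          r1 t * (deriv θ t)^2 - 1 / (Real.sqrt 3 * (r1 t)^2) + m2 * A1 t
      ∧ deriv (deriv β) t = (B2 t - 2 * deriv r2 t * deriv β t) / r2 t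
      ∧ deriv (deriv r2) t =
          r2 t * (deriv β t)^2 + A2 t - m2 / (Real.sqrt 3 * (r2 t)^2)) :
    ∀ t1 ∈ Set.Ioo a b, ∀ t2 ∈ Set.Ioo a b,
      3 * (r1 t1)^2 * deriv θ t1 + 3 * m2 * (r2 t1)^2 * deriv β t1
        = 3 * (r1 t2)^2 * deriv θ t2 + 3 * m2 * (r2 t2)^2 * deriv β t2 := by
  have key : ∀ t ∈ Set.Ioo a b, HasDerivAt
      (fun t => 3 * (r1 t)^2 * deriv θ t + 3 * m2 * (r2 t)^2 * deriv β t) 0 t := by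
    intro t ht
    obtain ⟨h1, -, h3, -⟩ := hODE t ht
    have p1 := (hr1pos t ht).ne'
    have p2 := (hr2pos t ht).ne'
    have e1 : r1 t * deriv (deriv θ) t = m2 * B1 t - 2 * deriv r1 t * deriv θ t := by
      rw [h1]; field_simp
    have e2 : r2 t * deriv (deriv β) t = B2 t - 2 * deriv r2 t * deriv β t := by
      rw [h3]; field_simp
    have e3 : r1 t * B1 t + r2 t * B2 t = 0 := by
      rw [hB1, hB2]; ring
    have D := ((((hr1d t ht).hasDerivAt.pow 2).const_mul 3).mul (hθd2 t ht).hasDerivAt).add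
      ((((hr2d t ht).hasDerivAt.pow 2).const_mul (3 * m2)).mul (hβd2 t ht).hasDerivAt)
    refine D.congr_deriv ?_
    simp only [Pi.pow_apply]
    push_cast
    linear_combination 3 * r1 t * e1 + 3 * m2 * r2 t * e2 + 3 * m2 * e3
  intro t1 h1 t2 h2
  exact isOpen_Ioo.is_const_of_deriv_eq_zero isPreconnected_Ioo
    (fun t ht => (key t ht).differentiableAt.differentiableWithinAt)
    (fun t ht => (key t ht).deriv) h1 h2
end

section
/- Suppose r1, r2, θ, β are twice differentiable on an interval, r1(t), r2(t) > 0 and d1(t), d2(t), d3(t) > 0 there, and they satisfy the reduced 6-body system θ̈ = (m2 B1 − 2 ṙ1 θ̇)/r1, r̈1 = r1 θ̇² − 1/(√3 r1²) + m2 A1, β̈ = (B2 − 2 ṙ2 β̇)/r2, r̈2 = r2 β̇² + A2 − m2/(√3 r2²). Then the total energy E(t) = (3/2)(ṙ1² + r1² θ̇²) + (3 m2/2)(ṙ2² + r2² β̇²) − ( √3/r1 + √3 m2²/r2 + 3 m2 (1/d1 + 1/d2 + 1/d3) ) is constant on the interval. -/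
open Real

/-- Conservation of total energy for the reduced 6-body system:
`E = (3/2)(ṙ1² + r1² θ̇²) + (3 m2/2)(ṙ2² + r2² β̇²) − (√3/r1 + √3 m2²/r2 + 3 m2 (1/d1 + 1/d2 + 1/d3))` is constant on the interval. -/
theorem six_body_energy_conserved
    (m2 : ℝ) (hm2 : 0 < m2) (a b : ℝ)
    (r1 r2 θ β : ℝ → ℝ)
    (δ d1 d2 d3 A1 B1 A2 B2 : ℝ → ℝ)
    (hδ : ∀ t, δ t = θ t - β t)
    (hd1 : ∀ t, d1 t =
      Real.sqrt ((r1 t)^2 - 2 * r1 t * r2 t * Real.sin (π/6 + δ t) + (r2 t)^2))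
    (hd2 : ∀ t, d2 t =
      Real.sqrt ((r1 t)^2 + 2 * r1 t * r2 t * Real.cos (δ t) + (r2 t)^2))
    (hd3 : ∀ t, d3 t =
      Real.sqrt ((r1 t)^2 - 2 * r1 t * r2 t * Real.sin (π/6 - δ t) + (r2 t)^2))
    (hA1 : ∀ t, A1 t =
      (-(r1 t) + r2 t * Real.sin (π/6 + δ t)) / (d1 t)^3
      + (-(r1 t) - r2 t * Real.cos (δ t)) / (d2 t)^3
      + (-(r1 t) + r2 t * Real.sin (π/6 - δ t)) / (d3 t)^3)
    (hB1 : ∀ t, B1 t =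
      r2 t * Real.cos (π/6 + δ t) / (d1 t)^3
      + r2 t * Real.sin (δ t) / (d2 t)^3
      - r2 t * Real.cos (π/6 - δ t) / (d3 t)^3)
    (hA2 : ∀ t, A2 t =
      (r1 t * Real.sin (π/6 + δ t) - r2 t) / (d1 t)^3
      + (r1 t * Real.sin (π/6 - δ t) - r2 t) / (d3 t)^3
      + (-(r1 t * Real.cos (δ t)) - r2 t) / (d2 t)^3)
    (hB2 : ∀ t, B2 t =
      -(r1 t * Real.cos (π/6 + δ t)) / (d1 t)^3
      + r1 t * Real.cos (π/6 - δ t) / (d3 t)^3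
      - r1 t * Real.sin (δ t) / (d2 t)^3)
    (hr1pos : ∀ t ∈ Set.Ioo a b, 0 < r1 t) (hr2pos : ∀ t ∈ Set.Ioo a b, 0 < r2 t)
    (hd1pos : ∀ t ∈ Set.Ioo a b, 0 < d1 t) (hd2pos : ∀ t ∈ Set.Ioo a b, 0 < d2 t)
    (hd3pos : ∀ t ∈ Set.Ioo a b, 0 < d3 t)
    (hr1d : ∀ t ∈ Set.Ioo a b, DifferentiableAt ℝ r1 t)
    (hr1d2 : ∀ t ∈ Set.Ioo a b, DifferentiableAt ℝ (deriv r1) t)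
    (hr2d : ∀ t ∈ Set.Ioo a b, DifferentiableAt ℝ r2 t)
    (hr2d2 : ∀ t ∈ Set.Ioo a b, DifferentiableAt ℝ (deriv r2) t)
    (hθd : ∀ t ∈ Set.Ioo a b, DifferentiableAt ℝ θ t)
    (hθd2 : ∀ t ∈ Set.Ioo a b, DifferentiableAt ℝ (deriv θ) t)
    (hβd : ∀ t ∈ Set.Ioo a b, DifferentiableAt ℝ β t)
    (hβd2 : ∀ t ∈ Set.Ioo a b, DifferentiableAt ℝ (deriv β) t)
    (hODE : ∀ t ∈ Set.Ioo a b,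
      deriv (deriv θ) t = (m2 * B1 t - 2 * deriv r1 t * deriv θ t) / r1 t
      ∧ deriv (deriv r1) t =
          r1 t * (deriv θ t)^2 - 1 / (Real.sqrt 3 * (r1 t)^2) + m2 * A1 t
      ∧ deriv (deriv β) t = (B2 t - 2 * deriv r2 t * deriv β t) / r2 t
      ∧ deriv (deriv r2) t =
          r2 t * (deriv β t)^2 + A2 t - m2 / (Real.sqrt 3 * (r2 t)^2)) :
    ∀ t1 ∈ Set.Ioo a b, ∀ t2 ∈ Set.Ioo a b,
      (3/2) * ((deriv r1 t1)^2 + (r1 t1)^2 * (deriv θ t1)^2)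
        + (3 * m2 / 2) * ((deriv r2 t1)^2 + (r2 t1)^2 * (deriv β t1)^2)
        - (Real.sqrt 3 / r1 t1 + Real.sqrt 3 * m2^2 / r2 t1
            + 3 * m2 * (1 / d1 t1 + 1 / d2 t1 + 1 / d3 t1))
      = (3/2) * ((deriv r1 t2)^2 + (r1 t2)^2 * (deriv θ t2)^2)
        + (3 * m2 / 2) * ((deriv r2 t2)^2 + (r2 t2)^2 * (deriv β t2)^2)
        - (Real.sqrt 3 / r1 t2 + Real.sqrt 3 * m2^2 / r2 t2
            + 3 * m2 * (1 / d1 t2 + 1 / d2 t2 + 1 / d3 t2)) := by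
  have key : ∀ t ∈ Set.Ioo a b, HasDerivAt (fun t => (3/2) * ((deriv r1 t)^2 + (r1 t)^2 * (deriv θ t)^2)
        + (3 * m2 / 2) * ((deriv r2 t)^2 + (r2 t)^2 * (deriv β t)^2)
        - (Real.sqrt 3 / r1 t + Real.sqrt 3 * m2^2 / r2 t
            + 3 * m2 * (1 / d1 t + 1 / d2 t + 1 / d3 t))) 0 t := by
    intro t ht
    obtain ⟨o1, o2, o3, o4⟩ := hODE t ht
    have p1 := hr1pos t ht
    have p2 := hr2pos t ht
    have q1 := hd1pos t ht
    have q2 := hd2pos t ht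
    have q3 := hd3pos t ht
    have h1 := (hr1d t ht).hasDerivAt
    have h1' := (hr1d2 t ht).hasDerivAt
    have h2 := (hr2d t ht).hasDerivAt
    have h2' := (hr2d2 t ht).hasDerivAt
    have hθ := (hθd t ht).hasDerivAt
    have hθ' := (hθd2 t ht).hasDerivAt
    have hβ := (hβd t ht).hasDerivAt
    have hβ' := (hβd2 t ht).hasDerivAt
    have hδ' : HasDerivAt δ (deriv θ t - deriv β t) t := by
      rw [show δ = fun t => θ t - β t from funext hδ]
      exact hθ.sub hβ
    have inv_sqrt : ∀ (d f : ℝ → ℝ) (f' : ℝ), (∀ s, d s = Real.sqrt (f s)) → 0 < d t →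
        HasDerivAt f f' t → HasDerivAt (fun s => 1 / d s) (-(f' / 2) / (d t)^3) t := by
      intro d f f' hd hp hf
      have hne : f t ≠ 0 := by
        intro h0
        rw [hd, h0, Real.sqrt_zero] at hp
        exact lt_irrefl _ hp
      have e := hf.sqrt hne
      rw [← hd t, ← show d = fun s => Real.sqrt (f s) from funext hd] at e
      have e2 := (hasDerivAt_const t (1:ℝ)).div e hp.ne'
      refine e2.congr_deriv ?_
      field_simp
      ring
    have k1 := inv_sqrt d1 _ _ hd1 q1 (((h1.pow 2).sub (((h1.const_mul 2).mul h2).mul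
      (hδ'.const_add (π/6)).sin)).add (h2.pow 2))
    have k2 := inv_sqrt d2 _ _ hd2 q2 (((h1.pow 2).add (((h1.const_mul 2).mul h2).mul
      hδ'.cos)).add (h2.pow 2))
    have k3 := inv_sqrt d3 _ _ hd3 q3 (((h1.pow 2).sub (((h1.const_mul 2).mul h2).mul
      (hδ'.const_sub (π/6)).sin)).add (h2.pow 2))
    have K := (((((h1'.pow 2).add ((h1.pow 2).mul (hθ'.pow 2))).const_mul (3/2)).add
      (((h2'.pow 2).add ((h2.pow 2).mul (hβ'.pow 2))).const_mul (3*m2/2))).sub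
      ((((hasDerivAt_const t (Real.sqrt 3)).div h1 p1.ne').add
        ((hasDerivAt_const t (Real.sqrt 3 * m2^2)).div h2 p2.ne')).add
        (((k1.add k2).add k3).const_mul (3*m2))))
    refine K.congr_deriv ?_
    have hs : (1:ℝ) / Real.sqrt 3 = Real.sqrt 3 / 3 := by
      have : Real.sqrt 3 ^ 2 = 3 := Real.sq_sqrt (by norm_num)
      have h0 : 0 < Real.sqrt 3 := by positivity
      field_simp
      linarith
    have o2' : deriv (deriv r1) t =
          r1 t * (deriv θ t)^2 - Real.sqrt 3 / 3 * (1 / (r1 t)^2) + m2 * A1 t := by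
      rw [o2, ← hs, one_div_mul_one_div]
    have o4' : deriv (deriv r2) t =
          r2 t * (deriv β t)^2 + A2 t - m2 * (Real.sqrt 3 / 3 * (1 / (r2 t)^2)) := by
      rw [o4, ← hs, one_div_mul_one_div, mul_one_div]
    rw [o1, o2', o3, o4', hA1, hA2, hB1, hB2]
    simp only [Pi.pow_apply, Pi.mul_apply]
    generalize Real.sqrt 3 = s
    field_simp
    ring
  intro t1 ht1 t2 ht2
  exact isOpen_Ioo.is_const_of_deriv_eq_zero isPreconnected_Ioo
    (fun t ht => (key t ht).differentiableAt.differentiableWithinAt)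
    (fun t ht => (key t ht).deriv) ht1 ht2
end

section
/- Let (r1, r2, θ, β) be a solution on ℝ of the reduced 4-body system r̈1 = r1 θ̇² − 1/(4 r1²) + m2[(r2 sin δ − r1)/d1³ + (−r2 sin δ − r1)/d2³], θ̈ = (m2 r2 cos δ (1/d1³ − 1/d2³) − 2 ṙ1 θ̇)/r1, r̈2 = r2 β̇² − m2/(4 r2²) + [(r1 sin δ − r2)/d1³ + (−r1 sin δ − r2)/d2³], β̈ = (r1 cos δ (1/d2³ − 1/d1³) − 2 ṙ2 β̇)/r2, with r1(t), r2(t) > 0 and d1(t), d2(t) > 0 for all t, satisfying the initial conditions r1(0) = x1, r2(0) = x2, θ(0) = 0, β(0) = 0, ṙ1(0) = 0, ṙ2(0) = 0, θ̇(0) = x3, β̇(0) = x4. Suppose there is T > 0 such that r1(T) = x1, r2(T) = x2, ṙ1(T) = 0, ṙ2(T) = 0, θ̇(T) = x3, β̇(T) = x4, and θ(T) − β(T) = π. Then for all t ∈ ℝ: r1(t+T) = r1(t), r2(t+T) = r2(t), θ(t+T) = θ(t) + θ(T), β(t+T) = β(t) + θ(T) − π. Consequently, if R denotes the rotation of the plane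 by angle θ(T), the bodies of the two-pair ansatz satisfy r⃗1(t+T) = R r⃗1(t), r⃗2(t+T) = R r⃗2(t), r⃗3(t+T) = R r⃗4(t), and r⃗4(t+T) = R r⃗3(t); i.e., the solution is periodic up to a rotation and the exchange of bodies 3 and 4. -/
open Real

/-- Global uniqueness for autonomous ODEs along a curve where the field is `C¹`. -/
lemma ode_unique_global {E : Type*} [NormedAddCommGroup E] [NormedSpace ℝ E]
    (v : E → E) (f g : ℝ → E) (hf : ∀ t, HasDerivAt f (v (f t)) t)
    (hg : ∀ t, HasDerivAt g (v (g t)) t) (hv : ∀ t, ContDiffAt ℝ 1 v (f t))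
    (h0 : f 0 = g 0) : ∀ t, f t = g t := by
  have hfc : Continuous f := continuous_iff_continuousAt.2 fun t => (hf t).continuousAt
  have hgc : Continuous g := continuous_iff_continuousAt.2 fun t => (hg t).continuousAt
  have hclosed : IsClosed {t | f t = g t} := isClosed_eq hfc hgc
  have hopen : IsOpen {t | f t = g t} := by
    rw [isOpen_iff_mem_nhds]
    intro t ht
    have ht' : f t = g t := ht
    obtain ⟨K, s, hs, hK⟩ := (hv t).exists_lipschitzOnWith
    have h1 : ∀ᶠ x in nhds t, f x ∈ s := (hf t).continuousAt.eventually hs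
    have h2 : ∀ᶠ x in nhds t, g x ∈ s := by
      have : s ∈ nhds (g t) := ht' ▸ hs
      exact (hg t).continuousAt.eventually this
    exact ODE_solution_unique_of_eventually (v := fun _ => v) (s := fun _ => s) (K := K)
      (Filter.Eventually.of_forall fun _ => hK)
      (h1.mono fun x hx => ⟨hf x, hx⟩) (h2.mono fun x hx => ⟨hg x, hx⟩) ht'
  have huniv : {t | f t = g t} = Set.univ :=
    IsClopen.eq_univ ⟨hclosed, hopen⟩ ⟨0, h0⟩
  intro t
  have : t ∈ {t | f t = g t} := huniv ▸ Set.mem_univ t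
  exact this

/-- State space: the two radii, the two angles, then their derivatives in the same order. -/
abbrev FBState := ℝ × ℝ × ℝ × ℝ × ℝ × ℝ × ℝ × ℝ

/-- First mutual distance as a function of the state. -/
noncomputable def fbD1 (a b th be : ℝ) : ℝ :=
  Real.sqrt (a ^ 2 + b ^ 2 - 2 * a * b * Real.sin (th - be))

/-- Second mutual distance as a function of the state. -/
noncomputable def fbD2 (a b th be : ℝ) : ℝ :=
  Real.sqrt (a ^ 2 + b ^ 2 + 2 * a * b * Real.sin (th - be))

/-- Radial acceleration of bodies 1, 2. -/
noncomputable def fbA1 (m2 a b th be w : ℝ) : ℝ :=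
  a * w ^ 2 - 1 / (4 * a ^ 2) + m2 * ((b * Real.sin (th - be) - a) / (fbD1 a b th be) ^ 3
    + (-(b * Real.sin (th - be)) - a) / (fbD2 a b th be) ^ 3)

/-- Angular acceleration of bodies 1, 2. -/
noncomputable def fbA2 (m2 a b th be p w : ℝ) : ℝ :=
  (m2 * b * Real.cos (th - be) * (1 / (fbD1 a b th be) ^ 3 - 1 / (fbD2 a b th be) ^ 3)
    - 2 * p * w) / a

/-- Radial acceleration of bodies 3, 4. -/
noncomputable def fbA3 (m2 a b th be u : ℝ) : ℝ :=
  b * u ^ 2 - m2 / (4 * b ^ 2) + ((a * Real.sin (th - be) - b) / (fbD1 a b th be) ^ 3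
    + (-(a * Real.sin (th - be)) - b) / (fbD2 a b th be) ^ 3)

/-- Angular acceleration of bodies 3, 4. -/
noncomputable def fbA4 (a b th be q u : ℝ) : ℝ :=
  (a * Real.cos (th - be) * (1 / (fbD2 a b th be) ^ 3 - 1 / (fbD1 a b th be) ^ 3)
    - 2 * q * u) / b

/-- The first-order vector field of the reduced system. -/
noncomputable def fbField (m2 : ℝ) : FBState → FBState := fun z =>
  (z.2.2.2.2.1, z.2.2.2.2.2.1, z.2.2.2.2.2.2.1, z.2.2.2.2.2.2.2,
    fbA1 m2 z.1 z.2.1 z.2.2.1 z.2.2.2.1 z.2.2.2.2.2.2.1,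
    fbA3 m2 z.1 z.2.1 z.2.2.1 z.2.2.2.1 z.2.2.2.2.2.2.2,
    fbA2 m2 z.1 z.2.1 z.2.2.1 z.2.2.2.1 z.2.2.2.2.1 z.2.2.2.2.2.2.1,
    fbA4 z.1 z.2.1 z.2.2.1 z.2.2.2.1 z.2.2.2.2.2.1 z.2.2.2.2.2.2.2)

lemma fbField_contDiffAt (m2 : ℝ) (z : FBState) (ha : z.1 ≠ 0) (hb : z.2.1 ≠ 0)
    (h1 : fbD1 z.1 z.2.1 z.2.2.1 z.2.2.2.1 ≠ 0) (h2 : fbD2 z.1 z.2.1 z.2.2.1 z.2.2.2.1 ≠ 0) :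
    ContDiffAt ℝ 1 (fbField m2) z := by
  have e1 : z.1 ^ 2 + z.2.1 ^ 2 - 2 * z.1 * z.2.1 * Real.sin (z.2.2.1 - z.2.2.2.1) ≠ 0 := by
    intro h
    exact h1 (by rw [fbD1, h, Real.sqrt_zero])
  have e2 : z.1 ^ 2 + z.2.1 ^ 2 + 2 * z.1 * z.2.1 * Real.sin (z.2.2.1 - z.2.2.2.1) ≠ 0 := by
    intro h
    exact h2 (by rw [fbD2, h, Real.sqrt_zero])
  have c1 : ContDiffAt ℝ 1
      (fun z : FBState => fbD1 z.1 z.2.1 z.2.2.1 z.2.2.2.1) z := by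
    unfold fbD1
    refine ContDiffAt.sqrt ?_ e1
    fun_prop
  have c2 : ContDiffAt ℝ 1
      (fun z : FBState => fbD2 z.1 z.2.1 z.2.2.1 z.2.2.2.1) z := by
    unfold fbD2
    refine ContDiffAt.sqrt ?_ e2
    fun_prop
  have h1' := pow_ne_zero 3 h1
  have h2' := pow_ne_zero 3 h2
  have ha' : 4 * z.1 ^ 2 ≠ 0 := by positivity
  have hb' : 4 * z.2.1 ^ 2 ≠ 0 := by positivity
  unfold fbField fbA1 fbA2 fbA3 fbA4
  fun_prop (disch := assumption)

/-- A solution of the reduced 4-body system whose return conditions hold at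
time `T` is periodic up to a rotation by `θ T` and the exchange of bodies 3
and 4. -/
theorem four_body_periodic_up_to_rotation
    (m2 : ℝ) (hm2 : 0 < m2)
    (x1 x2 : ℝ) (hx1 : 0 < x1) (hx2 : 0 < x2) (x3 x4 : ℝ)
    (r1 r2 θ β : ℝ → ℝ)
    (hr1pos : ∀ t, 0 < r1 t) (hr2pos : ∀ t, 0 < r2 t)
    (hr1d : Differentiable ℝ r1) (hr1d2 : Differentiable ℝ (deriv r1))
    (hr2d : Differentiable ℝ r2) (hr2d2 : Differentiable ℝ (deriv r2))
    (hθd : Differentiable ℝ θ) (hθd2 : Differentiable ℝ (deriv θ))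
    (hβd : Differentiable ℝ β) (hβd2 : Differentiable ℝ (deriv β))
    (δ d1 d2 : ℝ → ℝ)
    (hδ : ∀ t, δ t = θ t - β t)
    (hd1 : ∀ t, d1 t = Real.sqrt ((r1 t)^2 + (r2 t)^2 - 2 * r1 t * r2 t * Real.sin (δ t)))
    (hd2 : ∀ t, d2 t = Real.sqrt ((r1 t)^2 + (r2 t)^2 + 2 * r1 t * r2 t * Real.sin (δ t)))
    (hd1pos : ∀ t, 0 < d1 t) (hd2pos : ∀ t, 0 < d2 t)
    (hODE : ∀ t : ℝ,
      deriv (deriv r1) t =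
          r1 t * (deriv θ t)^2 - 1 / (4 * (r1 t)^2)
          + m2 * ((r2 t * Real.sin (δ t) - r1 t) / (d1 t)^3
                + (-(r2 t * Real.sin (δ t)) - r1 t) / (d2 t)^3)
      ∧ deriv (deriv θ) t =
          (m2 * r2 t * Real.cos (δ t) * (1/(d1 t)^3 - 1/(d2 t)^3)
            - 2 * deriv r1 t * deriv θ t) / r1 t
      ∧ deriv (deriv r2) t =
          r2 t * (deriv β t)^2 - m2 / (4 * (r2 t)^2)
          + ((r1 t * Real.sin (δ t) - r2 t) / (d1 t)^3
            + (-(r1 t * Real.sin (δ t)) - r2 t) / (d2 t)^3)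
      ∧ deriv (deriv β) t =
          (r1 t * Real.cos (δ t) * (1/(d2 t)^3 - 1/(d1 t)^3)
            - 2 * deriv r2 t * deriv β t) / r2 t)
    (hinit1 : r1 0 = x1) (hinit2 : r2 0 = x2)
    (hinit3 : θ 0 = 0) (hinit4 : β 0 = 0)
    (hinit5 : deriv r1 0 = 0) (hinit6 : deriv r2 0 = 0)
    (hinit7 : deriv θ 0 = x3) (hinit8 : deriv β 0 = x4)
    (T : ℝ) (hT : 0 < T)
    (hret1 : r1 T = x1) (hret2 : r2 T = x2)
    (hret3 : deriv r1 T = 0) (hret4 : deriv r2 T = 0)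
    (hret5 : deriv θ T = x3) (hret6 : deriv β T = x4)
    (hret7 : θ T - β T = π)
    (bodies : Fin 4 → ℝ → EuclideanSpace ℝ (Fin 2))
    (hb0 : ∀ t, bodies 0 t = vec2 (r1 t * Real.cos (θ t)) (r1 t * Real.sin (θ t)))
    (hb1 : ∀ t, bodies 1 t = -(bodies 0 t))
    (hb2 : ∀ t, bodies 2 t =
      vec2 (r2 t * Real.cos (β t + π/2)) (r2 t * Real.sin (β t + π/2)))
    (hb3 : ∀ t, bodies 3 t = -(bodies 2 t))
    (R : EuclideanSpace ℝ (Fin 2) → EuclideanSpace ℝ (Fin 2))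
    (hR : ∀ v, R v = vec2 (Real.cos (θ T) * v 0 - Real.sin (θ T) * v 1)
                          (Real.sin (θ T) * v 0 + Real.cos (θ T) * v 1)) :
    (∀ t : ℝ, r1 (t + T) = r1 t ∧ r2 (t + T) = r2 t
        ∧ θ (t + T) = θ t + θ T ∧ β (t + T) = β t + θ T - π)
    ∧ (∀ t : ℝ, bodies 0 (t + T) = R (bodies 0 t)
        ∧ bodies 1 (t + T) = R (bodies 1 t)
        ∧ bodies 2 (t + T) = R (bodies 3 t)
        ∧ bodies 3 (t + T) = R (bodies 2 t)) := by
  have hF : ∀ t, HasDerivAt (fun t => ((r1 t, r2 t, θ t, β t, deriv r1 t, deriv r2 t,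
      deriv θ t, deriv β t) : FBState))
      (fbField m2 (r1 t, r2 t, θ t, β t, deriv r1 t, deriv r2 t, deriv θ t, deriv β t)) t := by
    intro t
    obtain ⟨o1, o2, o3, o4⟩ := hODE t
    rw [hd1, hd2, hδ] at o1 o2 o3 o4
    have k1 := (hr1d2 t).hasDerivAt
    have k2 := (hθd2 t).hasDerivAt
    have k3 := (hr2d2 t).hasDerivAt
    have k4 := (hβd2 t).hasDerivAt
    rw [o1] at k1
    rw [o2] at k2
    rw [o3] at k3
    rw [o4] at k4
    exact (hr1d t).hasDerivAt.prodMk ((hr2d t).hasDerivAt.prodMk ((hθd t).hasDerivAt.prodMk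
      ((hβd t).hasDerivAt.prodMk (k1.prodMk (k3.prodMk (k2.prodMk k4))))))
  have hG : ∀ t, HasDerivAt (fun t => ((r1 (t + T), r2 (t + T), θ (t + T) - θ T,
      β (t + T) - θ T + π, deriv r1 (t + T), deriv r2 (t + T),
      deriv θ (t + T), deriv β (t + T)) : FBState))
      (fbField m2 (r1 (t + T), r2 (t + T), θ (t + T) - θ T,
      β (t + T) - θ T + π, deriv r1 (t + T), deriv r2 (t + T),
      deriv θ (t + T), deriv β (t + T))) t := by
    intro t
    have key := hF (t + T)
    have hs : θ (t + T) - θ T - (β (t + T) - θ T + π) = θ (t + T) - β (t + T) - π := by ring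
    have e1 : fbD1 (r1 (t + T)) (r2 (t + T)) (θ (t + T) - θ T) (β (t + T) - θ T + π)
        = fbD2 (r1 (t + T)) (r2 (t + T)) (θ (t + T)) (β (t + T)) := by
      unfold fbD1 fbD2
      rw [hs, Real.sin_sub_pi]
      congr 1
      ring
    have e2 : fbD2 (r1 (t + T)) (r2 (t + T)) (θ (t + T) - θ T) (β (t + T) - θ T + π)
        = fbD1 (r1 (t + T)) (r2 (t + T)) (θ (t + T)) (β (t + T)) := by
      unfold fbD1 fbD2
      rw [hs, Real.sin_sub_pi]
      congr 1
      ring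
    have hfield : fbField m2 (r1 (t + T), r2 (t + T), θ (t + T) - θ T,
        β (t + T) - θ T + π, deriv r1 (t + T), deriv r2 (t + T),
        deriv θ (t + T), deriv β (t + T)) = fbField m2 (r1 (t + T), r2 (t + T), θ (t + T),
        β (t + T), deriv r1 (t + T), deriv r2 (t + T),
        deriv θ (t + T), deriv β (t + T)) := by
      simp only [fbField, fbA1, fbA2, fbA3, fbA4, e1, e2, hs, Real.sin_sub_pi, Real.cos_sub_pi,
        Prod.mk.injEq, true_and]
      refine ⟨?_, ?_, ?_, ?_⟩ <;> ring
    rw [hfield]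
    have k := (key.comp_add_const t T).add_const ((0, 0, -θ T, -θ T + π, 0, 0, 0, 0) : FBState)
    refine k.congr_of_eventuallyEq (Filter.Eventually.of_forall fun s => ?_)
    simp [sub_eq_add_neg, add_assoc]
  have hC : ∀ t, ContDiffAt ℝ 1 (fbField m2)
      (r1 t, r2 t, θ t, β t, deriv r1 t, deriv r2 t, deriv θ t, deriv β t) := by
    intro t
    refine fbField_contDiffAt m2 _ (hr1pos t).ne' (hr2pos t).ne' ?_ ?_
    · have := (hd1pos t).ne'
      rw [hd1, hδ] at this
      exact this
    · have := (hd2pos t).ne'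
      rw [hd2, hδ] at this
      exact this
  have hU := ode_unique_global (fbField m2) _ _ hF hG hC (by
    have : β T - θ T + π = 0 := by linarith
    simp [hinit1, hinit2, hinit3, hinit4, hinit5, hinit6, hinit7, hinit8, hret1, hret2, hret3,
      hret4, hret5, hret6, this])
  have hA : ∀ t : ℝ, r1 (t + T) = r1 t ∧ r2 (t + T) = r2 t
        ∧ θ (t + T) = θ t + θ T ∧ β (t + T) = β t + θ T - π := by
    intro t
    have h := hU t
    simp only [Prod.mk.injEq] at h
    obtain ⟨q1, q2, q3, q4, -⟩ := h
    exact ⟨q1.symm, q2.symm, by linarith, by linarith⟩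
  refine ⟨hA, fun t => ?_⟩
  obtain ⟨q1, q2, q3, q4⟩ := hA t
  have q4' : β (t + T) + π / 2 = (β t + π / 2 + θ T) - π := by rw [q4]; ring
  refine ⟨?_, ?_, ?_, ?_⟩
  all_goals
    simp only [hR, hb3, hb2, hb1, hb0, q1, q2, q3, q4', Real.sin_sub_pi, Real.cos_sub_pi,
      Real.cos_add _ (θ T), Real.sin_add _ (θ T)]
    ext i
    fin_cases i <;> simp [vec2] <;> ring
end

section
/- Let (r1, r2, θ, β) be a solution on ℝ of the reduced 6-body system θ̈ = (m2 B1 − 2 ṙ1 θ̇)/r1, r̈1 = r1 θ̇² − 1/(√3 r1²) + m2 A1, β̈ = (B2 − 2 ṙ2 β̇)/r2, r̈2 = r2 β̇² + A2 − m2/(√3 r2²), with r1(t), r2(t) > 0 and d1(t), d2(t), d3(t) > 0 for all t, satisfying the initial conditions r1(0) = x1, r2(0) = x2, θ(0) = 0, β(0) = 0, ṙ1(0) = 0, ṙ2(0) = 0, θ̇(0) = x3, β̇(0) = x4. Suppose there is T > 0 such that r1(T) = x1, r2(T) = x2, ṙ1(T) = 0, ṙ2(T) = 0, θ̇(T) =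 x3, β̇(T) = x4, and θ(T) − β(T) = 2π/3. Then for all t ∈ ℝ: r1(t+T) = r1(t), r2(t+T) = r2(t), θ(t+T) = θ(t) + θ(T), β(t+T) = β(t) + θ(T) − 2π/3. Consequently, if R denotes the rotation of the plane by angle θ(T), the bodies of the two-triangle ansatz satisfy r⃗k(t+T) = R r⃗k(t) for k = 1,2,3, and r⃗4(t+T) = R r⃗6(t), r⃗5(t+T) = R r⃗4(t), r⃗6(t+T) = R r⃗5(t); i.e., the solution is periodic up to a rotation and a cyclic relabeling of bodies 4, 5, 6. -/
open Real

theorem ode_unique_aux {E : Type*} [NormedAddCommGroup E] [NormedSpace ℝ E]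
    (f : E → E) (u v : ℝ → E) (hu : ∀ t, HasDerivAt u (f (u t)) t)
    (hv : ∀ t, HasDerivAt v (f (v t)) t) (hf : ∀ t, ContDiffAt ℝ 1 f (u t))
    (h0 : u 0 = v 0) : ∀ t, u t = v t := by
  have hcu : Continuous u := continuous_iff_continuousAt.2 fun t => (hu t).continuousAt
  have hcv : Continuous v := continuous_iff_continuousAt.2 fun t => (hv t).continuousAt
  have hclosed : IsClosed {t | u t = v t} := isClosed_eq hcu hcv
  have hopen : IsOpen {t | u t = v t} := by
    rw [isOpen_iff_mem_nhds]
    intro t ht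
    obtain ⟨K, s, hs, hK⟩ := (hf t).exists_lipschitzOnWith
    have ht' : u t = v t := ht
    have h1 : ∀ᶠ x in nhds t, u x ∈ s := hcu.continuousAt hs
    have h2 : ∀ᶠ x in nhds t, v x ∈ s := hcv.continuousAt (by rw [← ht']; exact hs)
    exact ODE_solution_unique_of_eventually (v := fun _ => f) (s := fun _ => s) (K := K)
      (Filter.Eventually.of_forall fun _ => hK)
      (h1.mono fun x hx => ⟨hu x, hx⟩) (h2.mono fun x hx => ⟨hv x, hx⟩) ht'
  have := IsClopen.eq_univ ⟨hclosed, hopen⟩ ⟨0, h0⟩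
  intro t
  have : t ∈ {t | u t = v t} := by rw [this]; trivial
  exact this

noncomputable def auxQ1 (a b d : ℝ) : ℝ := a^2 - 2 * a * b * Real.sin (π/6 + d) + b^2
noncomputable def auxQ2 (a b d : ℝ) : ℝ := a^2 + 2 * a * b * Real.cos d + b^2
noncomputable def auxQ3 (a b d : ℝ) : ℝ := a^2 - 2 * a * b * Real.sin (π/6 - d) + b^2

noncomputable def auxA1 (a b d : ℝ) : ℝ :=
  (-a + b * Real.sin (π/6 + d)) / (Real.sqrt (auxQ1 a b d))^3
  + (-a - b * Real.cos d) / (Real.sqrt (auxQ2 a b d))^3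
  + (-a + b * Real.sin (π/6 - d)) / (Real.sqrt (auxQ3 a b d))^3
noncomputable def auxB1 (a b d : ℝ) : ℝ :=
  b * Real.cos (π/6 + d) / (Real.sqrt (auxQ1 a b d))^3
  + b * Real.sin d / (Real.sqrt (auxQ2 a b d))^3
  - b * Real.cos (π/6 - d) / (Real.sqrt (auxQ3 a b d))^3
noncomputable def auxA2 (a b d : ℝ) : ℝ :=
  (a * Real.sin (π/6 + d) - b) / (Real.sqrt (auxQ1 a b d))^3
  + (a * Real.sin (π/6 - d) - b) / (Real.sqrt (auxQ3 a b d))^3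
  + (-(a * Real.cos d) - b) / (Real.sqrt (auxQ2 a b d))^3
noncomputable def auxB2 (a b d : ℝ) : ℝ :=
  -(a * Real.cos (π/6 + d)) / (Real.sqrt (auxQ1 a b d))^3
  + a * Real.cos (π/6 - d) / (Real.sqrt (auxQ3 a b d))^3
  - a * Real.sin d / (Real.sqrt (auxQ2 a b d))^3

theorem aux_trig (d : ℝ) :
    Real.sin (π/6 + (d + 2*π/3)) = Real.sin (π/6 - d) ∧
    Real.cos (d + 2*π/3) = -Real.sin (π/6 + d) ∧
    Real.sin (π/6 - (d + 2*π/3)) = -Real.cos d ∧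
    Real.cos (π/6 + (d + 2*π/3)) = -Real.cos (π/6 - d) ∧
    Real.sin (d + 2*π/3) = Real.cos (π/6 + d) ∧
    Real.cos (π/6 - (d + 2*π/3)) = -Real.sin d := by
  refine ⟨?_, ?_, ?_, ?_, ?_, ?_⟩
  · rw [← Real.sin_pi_sub]; ring_nf
  · rw [← Real.cos_add_pi_div_two]; ring_nf
  · rw [← Real.sin_sub_pi_div_two, ← Real.sin_pi_sub, ← Real.sin_sub_two_pi]; ring_nf
  · rw [← Real.cos_pi_sub]; ring_nf
  · rw [← Real.sin_add_pi_div_two]; ring_nf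
  · rw [← Real.cos_add_pi_div_two, ← Real.cos_neg]; ring_nf

theorem aux_shift (a b d : ℝ) :
    auxA1 a b (d + 2*π/3) = auxA1 a b d ∧ auxB1 a b (d + 2*π/3) = auxB1 a b d ∧
    auxA2 a b (d + 2*π/3) = auxA2 a b d ∧ auxB2 a b (d + 2*π/3) = auxB2 a b d := by
  obtain ⟨h1, h2, h3, h4, h5, h6⟩ := aux_trig d
  have q1 : auxQ1 a b (d + 2*π/3) = auxQ3 a b d := by simp only [auxQ1, auxQ3, h1]
  have q2 : auxQ2 a b (d + 2*π/3) = auxQ1 a b d := by simp only [auxQ2, auxQ1, h2]; ring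
  have q3 : auxQ3 a b (d + 2*π/3) = auxQ2 a b d := by simp only [auxQ3, auxQ2, h3]; ring
  refine ⟨?_, ?_, ?_, ?_⟩
  · simp only [auxA1, q1, q2, q3, h1, h2, h3]; ring
  · simp only [auxB1, q1, q2, q3, h4, h5, h6]; ring
  · simp only [auxA2, q1, q2, q3, h1, h2, h3]; ring
  · simp only [auxB2, q1, q2, q3, h4, h5, h6]; ring

abbrev AuxE : Type := ℝ × ℝ × ℝ × ℝ × ℝ × ℝ × ℝ × ℝ

/-- Phase space vector field on positions and velocities. -/
noncomputable def auxF (m2 : ℝ) (p : AuxE) : AuxE :=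
  (p.2.2.2.2.1, p.2.2.2.2.2.1, p.2.2.2.2.2.2.1, p.2.2.2.2.2.2.2,
   p.1 * p.2.2.2.2.2.2.1^2 - 1 / (Real.sqrt 3 * p.1^2)
      + m2 * auxA1 p.1 p.2.1 (p.2.2.1 - p.2.2.2.1),
   p.2.1 * p.2.2.2.2.2.2.2^2 + auxA2 p.1 p.2.1 (p.2.2.1 - p.2.2.2.1)
      - m2 / (Real.sqrt 3 * p.2.1^2),
   (m2 * auxB1 p.1 p.2.1 (p.2.2.1 - p.2.2.2.1) - 2 * p.2.2.2.2.1 * p.2.2.2.2.2.2.1) / p.1,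
   (auxB2 p.1 p.2.1 (p.2.2.1 - p.2.2.2.1) - 2 * p.2.2.2.2.2.1 * p.2.2.2.2.2.2.2) / p.2.1)

theorem auxF_contDiffAt (m2 : ℝ) (p : AuxE) (h1 : 0 < p.1) (h2 : 0 < p.2.1)
    (q1 : 0 < auxQ1 p.1 p.2.1 (p.2.2.1 - p.2.2.2.1))
    (q2 : 0 < auxQ2 p.1 p.2.1 (p.2.2.1 - p.2.2.2.1))
    (q3 : 0 < auxQ3 p.1 p.2.1 (p.2.2.1 - p.2.2.2.1)) : ContDiffAt ℝ 1 (auxF m2) p := by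
  have c1 : ContDiffAt ℝ 1
      (fun p : AuxE => (Real.sqrt (auxQ1 p.1 p.2.1 (p.2.2.1 - p.2.2.2.1)))^3) p := by
    have c : ContDiffAt ℝ 1
        (fun p : AuxE => auxQ1 p.1 p.2.1 (p.2.2.1 - p.2.2.2.1)) p := by
      unfold auxQ1; fun_prop
    exact (c.sqrt q1.ne').pow 3
  have c2 : ContDiffAt ℝ 1
      (fun p : AuxE => (Real.sqrt (auxQ2 p.1 p.2.1 (p.2.2.1 - p.2.2.2.1)))^3) p := by
    have c : ContDiffAt ℝ 1
        (fun p : AuxE => auxQ2 p.1 p.2.1 (p.2.2.1 - p.2.2.2.1)) p := by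
      unfold auxQ2; fun_prop
    exact (c.sqrt q2.ne').pow 3
  have c3 : ContDiffAt ℝ 1
      (fun p : AuxE => (Real.sqrt (auxQ3 p.1 p.2.1 (p.2.2.1 - p.2.2.2.1)))^3) p := by
    have c : ContDiffAt ℝ 1
        (fun p : AuxE => auxQ3 p.1 p.2.1 (p.2.2.1 - p.2.2.2.1)) p := by
      unfold auxQ3; fun_prop
    exact (c.sqrt q3.ne').pow 3
  have n1 := (pow_pos (Real.sqrt_pos.2 q1) 3).ne'
  have n2 := (pow_pos (Real.sqrt_pos.2 q2) 3).ne'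
  have n3 := (pow_pos (Real.sqrt_pos.2 q3) 3).ne'
  have a1 : ContDiffAt ℝ 1
      (fun p : AuxE => auxA1 p.1 p.2.1 (p.2.2.1 - p.2.2.2.1)) p := by
    unfold auxA1
    exact ((ContDiffAt.div (by fun_prop) c1 n1).add (ContDiffAt.div (by fun_prop) c2 n2)).add
      (ContDiffAt.div (by fun_prop) c3 n3)
  have b1 : ContDiffAt ℝ 1
      (fun p : AuxE => auxB1 p.1 p.2.1 (p.2.2.1 - p.2.2.2.1)) p := by
    unfold auxB1
    exact ((ContDiffAt.div (by fun_prop) c1 n1).add (ContDiffAt.div (by fun_prop) c2 n2)).sub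
      (ContDiffAt.div (by fun_prop) c3 n3)
  have a2 : ContDiffAt ℝ 1
      (fun p : AuxE => auxA2 p.1 p.2.1 (p.2.2.1 - p.2.2.2.1)) p := by
    unfold auxA2
    exact ((ContDiffAt.div (by fun_prop) c1 n1).add (ContDiffAt.div (by fun_prop) c3 n3)).add
      (ContDiffAt.div (by fun_prop) c2 n2)
  have b2 : ContDiffAt ℝ 1
      (fun p : AuxE => auxB2 p.1 p.2.1 (p.2.2.1 - p.2.2.2.1)) p := by
    unfold auxB2
    exact ((ContDiffAt.div (by fun_prop) c1 n1).add (ContDiffAt.div (by fun_prop) c3 n3)).sub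
      (ContDiffAt.div (by fun_prop) c2 n2)
  have s3 : Real.sqrt 3 ≠ 0 := (Real.sqrt_pos.2 (by norm_num)).ne'
  have e1 : ContDiffAt ℝ 1 (fun p : AuxE => 1 / (Real.sqrt 3 * p.1^2)) p :=
    ContDiffAt.div (by fun_prop) (by fun_prop) (mul_ne_zero s3 (pow_ne_zero 2 h1.ne'))
  have e2 : ContDiffAt ℝ 1 (fun p : AuxE => m2 / (Real.sqrt 3 * p.2.1^2)) p :=
    ContDiffAt.div (by fun_prop) (by fun_prop) (mul_ne_zero s3 (pow_ne_zero 2 h2.ne'))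
  unfold auxF
  refine ContDiffAt.prodMk (by fun_prop) (ContDiffAt.prodMk (by fun_prop)
    (ContDiffAt.prodMk (by fun_prop) (ContDiffAt.prodMk (by fun_prop)
    (ContDiffAt.prodMk ?_ (ContDiffAt.prodMk ?_ (ContDiffAt.prodMk ?_ ?_))))))
  · exact (ContDiffAt.sub (by fun_prop) e1).add (contDiffAt_const.mul a1)
  · exact (ContDiffAt.add (by fun_prop) a2).sub e2
  · exact ContDiffAt.div ((contDiffAt_const.mul b1).sub (by fun_prop)) (by fun_prop) h1.ne'
  · exact ContDiffAt.div (b2.sub (by fun_prop)) (by fun_prop) h2.ne'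

theorem aux_rot (a x c : ℝ) :
    vec2 (Real.cos c * (vec2 (a * Real.cos x) (a * Real.sin x)) 0
        - Real.sin c * (vec2 (a * Real.cos x) (a * Real.sin x)) 1)
      (Real.sin c * (vec2 (a * Real.cos x) (a * Real.sin x)) 0
        + Real.cos c * (vec2 (a * Real.cos x) (a * Real.sin x)) 1)
      = vec2 (a * Real.cos (x + c)) (a * Real.sin (x + c)) := by
  have e0 : ∀ y z : ℝ, vec2 y z 0 = y := fun y z => rfl
  have e1 : ∀ y z : ℝ, vec2 y z 1 = z := fun y z => rfl
  rw [e0, e1, Real.cos_add, Real.sin_add]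
  congr 1 <;> ring

/-- A solution of the reduced 6-body system whose return conditions hold at
time `T` is periodic up to a rotation by `θ T` and a cyclic relabeling of
bodies 4, 5, 6. -/
theorem six_body_periodic_up_to_rotation
    (m2 : ℝ) (hm2 : 0 < m2)
    (x1 x2 : ℝ) (hx1 : 0 < x1) (hx2 : 0 < x2) (x3 x4 : ℝ)
    (r1 r2 θ β : ℝ → ℝ)
    (hr1pos : ∀ t, 0 < r1 t) (hr2pos : ∀ t, 0 < r2 t)
    (hr1d : Differentiable ℝ r1) (hr1d2 : Differentiable ℝ (deriv r1))
    (hr2d : Differentiable ℝ r2) (hr2d2 : Differentiable ℝ (deriv r2))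
    (hθd : Differentiable ℝ θ) (hθd2 : Differentiable ℝ (deriv θ))
    (hβd : Differentiable ℝ β) (hβd2 : Differentiable ℝ (deriv β))
    (δ d1 d2 d3 A1 B1 A2 B2 : ℝ → ℝ)
    (hδ : ∀ t, δ t = θ t - β t)
    (hd1 : ∀ t, d1 t =
      Real.sqrt ((r1 t)^2 - 2 * r1 t * r2 t * Real.sin (π/6 + δ t) + (r2 t)^2))
    (hd2 : ∀ t, d2 t =
      Real.sqrt ((r1 t)^2 + 2 * r1 t * r2 t * Real.cos (δ t) + (r2 t)^2))
    (hd3 : ∀ t, d3 t =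
      Real.sqrt ((r1 t)^2 - 2 * r1 t * r2 t * Real.sin (π/6 - δ t) + (r2 t)^2))
    (hd1pos : ∀ t, 0 < d1 t) (hd2pos : ∀ t, 0 < d2 t) (hd3pos : ∀ t, 0 < d3 t)
    (hA1 : ∀ t, A1 t =
      (-(r1 t) + r2 t * Real.sin (π/6 + δ t)) / (d1 t)^3
      + (-(r1 t) - r2 t * Real.cos (δ t)) / (d2 t)^3
      + (-(r1 t) + r2 t * Real.sin (π/6 - δ t)) / (d3 t)^3)
    (hB1 : ∀ t, B1 t =
      r2 t * Real.cos (π/6 + δ t) / (d1 t)^3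
      + r2 t * Real.sin (δ t) / (d2 t)^3
      - r2 t * Real.cos (π/6 - δ t) / (d3 t)^3)
    (hA2 : ∀ t, A2 t =
      (r1 t * Real.sin (π/6 + δ t) - r2 t) / (d1 t)^3
      + (r1 t * Real.sin (π/6 - δ t) - r2 t) / (d3 t)^3
      + (-(r1 t * Real.cos (δ t)) - r2 t) / (d2 t)^3)
    (hB2 : ∀ t, B2 t =
      -(r1 t * Real.cos (π/6 + δ t)) / (d1 t)^3
      + r1 t * Real.cos (π/6 - δ t) / (d3 t)^3
      - r1 t * Real.sin (δ t) / (d2 t)^3)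
    (hODE : ∀ t : ℝ,
      deriv (deriv θ) t = (m2 * B1 t - 2 * deriv r1 t * deriv θ t) / r1 t
      ∧ deriv (deriv r1) t =
          r1 t * (deriv θ t)^2 - 1 / (Real.sqrt 3 * (r1 t)^2) + m2 * A1 t
      ∧ deriv (deriv β) t = (B2 t - 2 * deriv r2 t * deriv β t) / r2 t
      ∧ deriv (deriv r2) t =
          r2 t * (deriv β t)^2 + A2 t - m2 / (Real.sqrt 3 * (r2 t)^2))
    (hinit1 : r1 0 = x1) (hinit2 : r2 0 = x2)
    (hinit3 : θ 0 = 0) (hinit4 : β 0 = 0)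
    (hinit5 : deriv r1 0 = 0) (hinit6 : deriv r2 0 = 0)
    (hinit7 : deriv θ 0 = x3) (hinit8 : deriv β 0 = x4)
    (T : ℝ) (hT : 0 < T)
    (hret1 : r1 T = x1) (hret2 : r2 T = x2)
    (hret3 : deriv r1 T = 0) (hret4 : deriv r2 T = 0)
    (hret5 : deriv θ T = x3) (hret6 : deriv β T = x4)
    (hret7 : θ T - β T = 2*π/3)
    (bodies : Fin 6 → ℝ → EuclideanSpace ℝ (Fin 2))
    (hb0 : ∀ t, bodies 0 t = vec2 (r1 t * Real.cos (θ t)) (r1 t * Real.sin (θ t)))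
    (hb1 : ∀ t, bodies 1 t =
      vec2 (r1 t * Real.cos (θ t + 2*π/3)) (r1 t * Real.sin (θ t + 2*π/3)))
    (hb2 : ∀ t, bodies 2 t =
      vec2 (r1 t * Real.cos (θ t + 4*π/3)) (r1 t * Real.sin (θ t + 4*π/3)))
    (hb3 : ∀ t, bodies 3 t =
      vec2 (r2 t * Real.cos (β t + π/3)) (r2 t * Real.sin (β t + π/3)))
    (hb4 : ∀ t, bodies 4 t =
      vec2 (r2 t * Real.cos (β t + π/3 + 2*π/3)) (r2 t * Real.sin (β t + π/3 + 2*π/3)))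
    (hb5 : ∀ t, bodies 5 t =
      vec2 (r2 t * Real.cos (β t + π/3 + 4*π/3)) (r2 t * Real.sin (β t + π/3 + 4*π/3)))
    (R : EuclideanSpace ℝ (Fin 2) → EuclideanSpace ℝ (Fin 2))
    (hR : ∀ v, R v = vec2 (Real.cos (θ T) * v 0 - Real.sin (θ T) * v 1)
                          (Real.sin (θ T) * v 0 + Real.cos (θ T) * v 1)) :
    (∀ t : ℝ, r1 (t + T) = r1 t ∧ r2 (t + T) = r2 t
        ∧ θ (t + T) = θ t + θ T ∧ β (t + T) = β t + θ T - 2*π/3)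
    ∧ (∀ t : ℝ, bodies 0 (t + T) = R (bodies 0 t)
        ∧ bodies 1 (t + T) = R (bodies 1 t)
        ∧ bodies 2 (t + T) = R (bodies 2 t)
        ∧ bodies 3 (t + T) = R (bodies 5 t)
        ∧ bodies 4 (t + T) = R (bodies 3 t)
        ∧ bodies 5 (t + T) = R (bodies 4 t)) := by
  have key : ∀ t : ℝ, r1 (t + T) = r1 t ∧ r2 (t + T) = r2 t
        ∧ θ (t + T) = θ t + θ T ∧ β (t + T) = β t + θ T - 2*π/3 := by
    have hA1' : ∀ t, A1 t = auxA1 (r1 t) (r2 t) (θ t - β t) := fun t => by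
      rw [hA1, hd1, hd2, hd3, hδ]; rfl
    have hA2' : ∀ t, A2 t = auxA2 (r1 t) (r2 t) (θ t - β t) := fun t => by
      rw [hA2, hd1, hd2, hd3, hδ]; rfl
    have hB1' : ∀ t, B1 t = auxB1 (r1 t) (r2 t) (θ t - β t) := fun t => by
      rw [hB1, hd1, hd2, hd3, hδ]; rfl
    have hB2' : ∀ t, B2 t = auxB2 (r1 t) (r2 t) (θ t - β t) := fun t => by
      rw [hB2, hd1, hd2, hd3, hδ]; rfl
    have hq1 : ∀ t, 0 < auxQ1 (r1 t) (r2 t) (θ t - β t) := fun t => by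
      have h := hd1pos t
      rw [hd1, hδ, Real.sqrt_pos] at h; exact h
    have hq2 : ∀ t, 0 < auxQ2 (r1 t) (r2 t) (θ t - β t) := fun t => by
      have h := hd2pos t
      rw [hd2, hδ, Real.sqrt_pos] at h; exact h
    have hq3 : ∀ t, 0 < auxQ3 (r1 t) (r2 t) (θ t - β t) := fun t => by
      have h := hd3pos t
      rw [hd3, hδ, Real.sqrt_pos] at h; exact h
    let u : ℝ → AuxE := fun t =>
      (r1 t, r2 t, θ t, β t, deriv r1 t, deriv r2 t, deriv θ t, deriv β t)
    let c : AuxE := (0, 0, θ T, β T, 0, 0, 0, 0)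
    have hu : ∀ t, HasDerivAt u (auxF m2 (u t)) t := by
      intro t
      obtain ⟨o1, o2, o3, o4⟩ := hODE t
      rw [hB1'] at o1
      rw [hA1'] at o2
      rw [hB2'] at o3
      rw [hA2'] at o4
      have k1 := (hr1d2 t).hasDerivAt
      have k2 := (hr2d2 t).hasDerivAt
      have k3 := (hθd2 t).hasDerivAt
      have k4 := (hβd2 t).hasDerivAt
      rw [o2] at k1
      rw [o4] at k2
      rw [o1] at k3
      rw [o3] at k4
      exact (hr1d t).hasDerivAt.prodMk <| (hr2d t).hasDerivAt.prodMk <|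
        (hθd t).hasDerivAt.prodMk <| (hβd t).hasDerivAt.prodMk <|
        k1.prodMk <| k2.prodMk <| k3.prodMk k4
    have hFc : ∀ p : AuxE, auxF m2 (p - c) = auxF m2 p := by
      rintro ⟨p1, p2, p3, p4, p5, p6, p7, p8⟩
      have e : p3 - p4 = (p3 - θ T - (p4 - β T)) + 2*π/3 := by rw [← hret7]; ring
      obtain ⟨s1, s2, s3, s4⟩ := aux_shift p1 p2 (p3 - θ T - (p4 - β T))
      rw [← e] at s1 s2 s3 s4
      simp only [auxF, c, Prod.mk_sub_mk, sub_zero, s1, s2, s3, s4]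
    have hv : ∀ t, HasDerivAt (fun t => u (t + T) - c) (auxF m2 (u (t + T) - c)) t := by
      intro t
      rw [hFc]
      exact ((hu (t + T)).comp_add_const t T).sub_const c
    have h0 : u 0 = u (0 + T) - c := by
      simp only [u, c, zero_add, Prod.mk_sub_mk, sub_zero, sub_self, hinit1, hinit2, hinit3,
        hinit4, hinit5, hinit6, hinit7, hinit8, hret1, hret2, hret3, hret4, hret5, hret6]
    have huv := ode_unique_aux (auxF m2) u (fun t => u (t + T) - c) hu hv
      (fun t => auxF_contDiffAt m2 (u t) (hr1pos t) (hr2pos t) (hq1 t) (hq2 t) (hq3 t)) h0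
    intro t
    have h := huv t
    simp only [u, c, Prod.mk_sub_mk, sub_zero, Prod.mk.injEq] at h
    obtain ⟨g1, g2, g3, g4, -⟩ := h
    exact ⟨g1.symm, g2.symm, by linarith, by linarith⟩
  refine ⟨key, fun t => ?_⟩
  obtain ⟨g1, g2, g3, g4⟩ := key t
  have wrap : ∀ a x y : ℝ, x + 2 * π = y →
      vec2 (a * Real.cos x) (a * Real.sin x) = vec2 (a * Real.cos y) (a * Real.sin y) := by
    intro a x y h
    rw [← h, Real.cos_add_two_pi, Real.sin_add_two_pi]
  refine ⟨?_, ?_, ?_, ?_, ?_, ?_⟩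
  · rw [hR, hb0, hb0, aux_rot, g1, g3]
  · rw [hR, hb1, hb1, aux_rot, g1, g3]
    ring_nf
  · rw [hR, hb2, hb2, aux_rot, g1, g3]
    ring_nf
  · rw [hR, hb3, hb5, aux_rot, g2, g4]
    exact wrap _ _ _ (by ring)
  · rw [hR, hb4, hb3, aux_rot, g2, g4]
    ring_nf
  · rw [hR, hb5, hb4, aux_rot, g2, g4]
    ring_nf
end
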